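/- Rademacher complexity of a ball of linear functionals (kernel-class step of Theorem 4.10): let V be a real inner product space, v₁,…,vₙ ∈ V, B ≥ 0, and let ε₁,…,εₙ be independent random variables each uniform on {−1, 1}. Then (1/n)·E[ sup_{w ∈ V, ‖w‖ ≤ B} Σ_{i=1}^n ε_i·⟨w, v_i⟩ ] ≤ (B/n)·√( Σ_{i=1}^n ‖v_i‖² ). -/

import Mathlib

open MeasureTheory ProbabilityTheory

/-! On the ball of radius `B` the functional `w ↦ ∑ i, ε i * ⟪w, v i⟫ = ⟪w, ∑ i, ε i • v i⟫` has
maximum `B * ‖∑ i, ε i • v i‖`. By Jensen's inequality the mean of this norm is at most the square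
root of the mean of its square, and in the latter the cross terms vanish because the `ε i` are
orthogonal in `L²`. -/

section InnerProduct

variable {V : Type*} [NormedAddCommGroup V] [InnerProductSpace ℝ V]

lemma isGreatest_inner_of_norm_le {B : ℝ} (hB : 0 ≤ B) (x : V) :
    IsGreatest {r : ℝ | ∃ w : V, ‖w‖ ≤ B ∧ r = inner ℝ w x} (B * ‖x‖) := by
  constructor
  · rcases eq_or_ne x 0 with rfl | hx
    · exact ⟨0, by simpa using hB, by simp⟩
    have hx' : ‖x‖ ≠ 0 := norm_ne_zero_iff.2 hx
    refine ⟨(B / ‖x‖) • x, ?_, ?_⟩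
    · rw [norm_smul, Real.norm_of_nonneg (by positivity), div_mul_cancel₀ _ hx']
    · rw [real_inner_smul_left, real_inner_self_eq_norm_sq]
      field_simp
  · rintro _ ⟨w, hw, rfl⟩
    exact (real_inner_le_norm w x).trans (by gcongr)

variable {Ω : Type*} [MeasurableSpace Ω] {μ : Measure Ω}

lemma integrable_inner_of_memLp_two {𝕜 E : Type*} [RCLike 𝕜] [NormedAddCommGroup E]
    [InnerProductSpace 𝕜 E] {f g : Ω → E} (hf : MemLp f 2 μ) (hg : MemLp g 2 μ) :
    Integrable (fun ω => inner 𝕜 (f ω) (g ω)) μ :=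
  (hf.norm.integrable_mul hg.norm).mono' (hf.1.inner hg.1)
    (.of_forall fun ω => norm_inner_le_norm (f ω) (g ω))

lemma integral_norm_sum_sq_of_pairwise_orthogonal {ι : Type*} [Fintype ι] {X : ι → Ω → V}
    (hX : ∀ i, MemLp (X i) 2 μ)
    (horth : Pairwise fun i j => ∫ ω, inner ℝ (X i ω) (X j ω) ∂μ = 0) :
    ∫ ω, ‖∑ i, X i ω‖ ^ 2 ∂μ = ∑ i, ∫ ω, ‖X i ω‖ ^ 2 ∂μ := by
  have hint (i j : ι) : Integrable (fun ω => inner ℝ (X i ω) (X j ω)) μ :=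
    integrable_inner_of_memLp_two (hX i) (hX j)
  simp_rw [← real_inner_self_eq_norm_sq, sum_inner, inner_sum]
  rw [integral_finsetSum _ fun i _ => integrable_finsetSum _ fun j _ => hint i j]
  refine Finset.sum_congr rfl fun i _ => ?_
  rw [integral_finsetSum _ fun j _ => hint i j]
  exact Fintype.sum_eq_single i fun j hji => horth hji.symm

end InnerProduct

section Moments

variable {Ω : Type*} [MeasurableSpace Ω] {P : Measure Ω}

lemma integral_le_sqrt_integral_sq [IsProbabilityMeasure P] {X : Ω → ℝ} (hX : MemLp X 2 P) :
    ∫ ω, X ω ∂P ≤ √(∫ ω, X ω ^ 2 ∂P) := by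
  have h := variance_nonneg X P
  rw [variance_eq_sub hX] at h
  exact Real.le_sqrt_of_sq_le (sub_nonneg.1 h)

lemma memLp_bernoulliMeasure {α E : Type*} [MeasurableSpace α] [MeasurableSingletonClass α]
    [NormedAddCommGroup E] (x y : α) (p : unitInterval) (f : α → E) (q : ENNReal) :
    MemLp f q (bernoulliMeasure x y p) := by
  refine .of_bound (integrable_bernoulliMeasure x y p f).1 (max ‖f x‖ ‖f y‖) ?_
  rw [bernoulliMeasure_def, ae_add_measure_iff]
  constructor <;> refine Measure.ae_smul_measure ?_ _ <;> simp [ae_dirac_eq]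

/-- The uniform distribution on the signs `{1, -1}`, i.e. the law of a Rademacher variable. -/
noncomputable def rademacherMeasure : Measure ℝ :=
  (1 / 2 : ENNReal) • Measure.dirac 1 + (1 / 2 : ENNReal) • Measure.dirac (-1)

lemma rademacherMeasure_eq_bernoulliMeasure :
    rademacherMeasure = bernoulliMeasure 1 (-1) ⟨1 / 2, by norm_num, by norm_num⟩ := by
  have hleft : unitInterval.toNNReal ⟨1 / 2, by norm_num, by norm_num⟩ = 1 / 2 := by
    ext
    simp
  have hright :
      unitInterval.toNNReal (unitInterval.symm ⟨1 / 2, by norm_num, by norm_num⟩) = 1 / 2 := by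
    ext
    norm_num
  rw [rademacherMeasure, bernoulliMeasure_def, hleft, hright]
  simp [ENNReal.smul_def]

lemma memLp_of_hasLaw_rademacherMeasure {X : Ω → ℝ} (hX : HasLaw X rademacherMeasure P)
    (q : ENNReal) : MemLp X q P := by
  have hid : MemLp id q (P.map X) := by
    rw [hX.map_eq, rademacherMeasure_eq_bernoulliMeasure]
    exact memLp_bernoulliMeasure _ _ _ id q
  exact hid.comp_of_map hX.aemeasurable

lemma integral_eq_zero_of_hasLaw_rademacherMeasure {X : Ω → ℝ}
    (hX : HasLaw X rademacherMeasure P) : ∫ ω, X ω ∂P = 0 := by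
  rw [hX.integral_eq, rademacherMeasure_eq_bernoulliMeasure, integral_bernoulliMeasure]
  norm_num

lemma integral_sq_eq_one_of_hasLaw_rademacherMeasure {X : Ω → ℝ}
    (hX : HasLaw X rademacherMeasure P) : ∫ ω, X ω ^ 2 ∂P = 1 := by
  have hcomp := hX.integral_comp (f := (· ^ 2)) (by fun_prop)
  rw [rademacherMeasure_eq_bernoulliMeasure, integral_bernoulliMeasure] at hcomp
  exact hcomp.trans (by norm_num)

lemma pairwise_integral_mul_eq_zero_of_iIndepFun {ι : Type*} {X : ι → Ω → ℝ}
    (hindep : iIndepFun X P) (hX : ∀ i, AEStronglyMeasurable (X i) P)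
    (hmean : ∀ i, ∫ ω, X i ω ∂P = 0) : Pairwise fun i j => ∫ ω, X i ω * X j ω ∂P = 0 := by
  intro i j hij
  rw [(hindep.indepFun hij).integral_fun_mul_eq_mul_integral (hX i) (hX j), hmean i, zero_mul]

end Moments

theorem rademacher_complexity_ball_general {Ω : Type*} [MeasurableSpace Ω] {P : Measure Ω}
    [IsProbabilityMeasure P] {V : Type*} [NormedAddCommGroup V] [InnerProductSpace ℝ V]
    {ι : Type*} [Fintype ι] (v : ι → V) {B : ℝ} (hB : 0 ≤ B) {ε : ι → Ω → ℝ}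
    (hε : ∀ i, MemLp (ε i) 2 P) (horth : Pairwise fun i j => ∫ ω, ε i ω * ε j ω ∂P = 0) :
    (1 / Fintype.card ι : ℝ) * ∫ ω, sSup {r : ℝ | ∃ w : V, ‖w‖ ≤ B ∧
        r = ∑ i, ε i ω * inner ℝ w (v i)} ∂P
      ≤ B / Fintype.card ι * √(∑ i, (∫ ω, ε i ω ^ 2 ∂P) * ‖v i‖ ^ 2) := by
  have hX (i : ι) : MemLp (fun ω => ε i ω • v i) 2 P :=
    (ContinuousLinearMap.toSpanSingleton ℝ (v i)).comp_memLp' (hε i)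
  have hsup (ω : Ω) : sSup {r : ℝ | ∃ w : V, ‖w‖ ≤ B ∧ r = ∑ i, ε i ω * inner ℝ w (v i)}
      = B * ‖∑ i, ε i ω • v i‖ := by
    simpa only [inner_sum, real_inner_smul_right]
      using (isGreatest_inner_of_norm_le hB (∑ i, ε i ω • v i)).csSup_eq
  have hsecond : ∫ ω, ‖∑ i, ε i ω • v i‖ ^ 2 ∂P = ∑ i, (∫ ω, ε i ω ^ 2 ∂P) * ‖v i‖ ^ 2 := by
    rw [integral_norm_sum_sq_of_pairwise_orthogonal hX fun i j hij => ?_]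
    · simp only [norm_smul, mul_pow, Real.norm_eq_abs, sq_abs, integral_mul_const]
    · simp_rw [real_inner_smul_left, real_inner_smul_right, ← mul_assoc, integral_mul_const]
      rw [horth hij, zero_mul]
  calc
    _ = B / Fintype.card ι * ∫ ω, ‖∑ i, ε i ω • v i‖ ∂P := by
      simp_rw [hsup, integral_const_mul]
      ring
    _ ≤ B / Fintype.card ι * √(∫ ω, ‖∑ i, ε i ω • v i‖ ^ 2 ∂P) := by
      gcongr
      exact integral_le_sqrt_integral_sq (memLp_finsetSum _ fun i _ => hX i).norm
    _ = _ := by rw [hsecond]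

/-- Rademacher complexity of a ball of linear functionals (kernel-class step of
Theorem 4.10): if `ε₁,…,εₙ` are independent signs uniform on `{−1,1}` and
`v₁,…,vₙ` are vectors of a real inner product space, then
`(1/n)·E[sup_{‖w‖ ≤ B} Σ i, ε_i⟨w, v_i⟩] ≤ (B/n)·√(Σ i, ‖v_i‖²)`. -/
theorem rademacher_complexity_ball
    {Ω : Type*} [MeasurableSpace Ω] (P : Measure Ω) [IsProbabilityMeasure P]
    {V : Type*} [NormedAddCommGroup V] [InnerProductSpace ℝ V]
    {n : ℕ} (v : Fin n → V) (B : ℝ) (hB : 0 ≤ B) (ε : Fin n → Ω → ℝ)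
    (hmeas : ∀ i, Measurable (ε i))
    (hindep : iIndepFun ε P)
    (hlaw : ∀ i, Measure.map (ε i) P
      = (1 / 2 : ENNReal) • Measure.dirac (1 : ℝ)
        + (1 / 2 : ENNReal) • Measure.dirac (-1 : ℝ)) :
    (1 / n : ℝ) * ∫ ω, sSup {r : ℝ | ∃ w : V, ‖w‖ ≤ B ∧
        r = ∑ i, ε i ω * (inner ℝ w (v i) : ℝ)} ∂P
      ≤ B / n * Real.sqrt (∑ i, ‖v i‖ ^ 2) := by
  have hε (i) : HasLaw (ε i) rademacherMeasure P := ⟨(hmeas i).aemeasurable, hlaw i⟩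
  have horth := pairwise_integral_mul_eq_zero_of_iIndepFun hindep
    (fun i => (hmeas i).aestronglyMeasurable)
    fun i => integral_eq_zero_of_hasLaw_rademacherMeasure (hε i)
  simpa only [integral_sq_eq_one_of_hasLaw_rademacherMeasure (hε _), one_mul, Fintype.card_fin]
    using rademacher_complexity_ball_general v hB
      (fun i => memLp_of_hasLaw_rademacherMeasure (hε i) 2) horth
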